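/- Let Y be a real Banach space and let f : P^ω_1 → Y be a bi-Lipschitz embedding. Then ‖f(r) − f(s)‖ ≤ 3·Lip(f)·(1 − (2/3)·β̄_Y(2/dist(f))). -/

import Mathlib

open Set Function Filter

open scoped ENNReal

attribute [local instance] Classical.propDecidable

noncomputable section

def LipUB {α β : Type*} (dα : α → α → ℝ) (dβ : β → β → ℝ) (f : α → β) (L : ℝ) : Prop :=
  ∀ a b : α, dβ (f a) (f b) ≤ L * dα a b

def CoLipUB {α β : Type*} (dα : α → α → ℝ) (dβ : β → β → ℝ) (f : α → β) (C : ℝ) : Prop :=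
  ∀ a b : α, dα a b ≤ C * dβ (f a) (f b)

def IsBiLipEmb {α β : Type*} (dα : α → α → ℝ) (dβ : β → β → ℝ) (f : α → β) : Prop :=
  Function.Injective f ∧ ∃ L C : ℝ, LipUB dα dβ f L ∧ CoLipUB dα dβ f C

def distortionSet (α β : Type*) (dα : α → α → ℝ) (dβ : β → β → ℝ) : Set ℝ :=
  {D | ∃ f : α → β, Function.Injective f ∧ ∃ L C : ℝ,
    LipUB dα dβ f L ∧ CoLipUB dα dβ f C ∧ D = L * C}

def cDist (α β : Type*) (dα : α → α → ℝ) (dβ : β → β → ℝ) : ℝ≥0∞ :=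
  ⨅ D ∈ distortionSet α β dα dβ, ENNReal.ofReal D
def lipConst {α β : Type*} (dα : α → α → ℝ) (dβ : β → β → ℝ) (f : α → β) : ℝ :=
  sSup {r : ℝ | ∃ a b : α, dα a b ≠ 0 ∧ r = dβ (f a) (f b) / dα a b}

def colipConst {α β : Type*} (dα : α → α → ℝ) (dβ : β → β → ℝ) (f : α → β) : ℝ :=
  sSup {r : ℝ | ∃ a b : α, dβ (f a) (f b) ≠ 0 ∧ r = dα a b / dβ (f a) (f b)}

def distortionOf {α β : Type*} (dα : α → α → ℝ) (dβ : β → β → ℝ) (f : α → β) : ℝ :=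
  lipConst dα dβ f * colipConst dα dβ f
def rolewiczSet (Y : Type*) [SeminormedAddCommGroup Y] (t : ℝ) : Set ℝ :=
  {s | ∃ x : Y, ‖x‖ ≤ 1 ∧ ∃ y : ℕ → Y, (∀ i, ‖y i‖ ≤ 1) ∧
    (∀ n m : ℕ, n ≠ m → t ≤ ‖y n - y m‖) ∧ s = ⨅ i, ‖x - y i‖ / 2}

def rolewiczMod (Y : Type*) [SeminormedAddCommGroup Y] (t : ℝ) : ℝ :=
  1 - sSup (rolewiczSet Y t)

def HasBeta (Y : Type*) [SeminormedAddCommGroup Y] : Prop :=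
  ∀ t : ℝ, 0 < t → t ≤ 2 → 0 < rolewiczMod Y t

def HasBetaP (Y : Type*) [SeminormedAddCommGroup Y] (p γ : ℝ) : Prop :=
  ∀ t : ℝ, 0 < t → t ≤ 2 → (rolewiczSet Y t).Nonempty → γ * t ^ p ≤ rolewiczMod Y t
inductive P1V : Type | r | b | s | t (i : ℕ)

def p1Dist : P1V → P1V → ℝ
  | P1V.r, P1V.r => 0
  | P1V.b, P1V.b => 0
  | P1V.s, P1V.s => 0
  | P1V.t i, P1V.t j => if i = j then 0 else 2
  | P1V.r, P1V.b => 1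
  | P1V.b, P1V.r => 1
  | P1V.r, P1V.s => 3
  | P1V.s, P1V.r => 3
  | P1V.r, P1V.t _ => 2
  | P1V.t _, P1V.r => 2
  | P1V.b, P1V.s => 2
  | P1V.s, P1V.b => 2
  | P1V.b, P1V.t _ => 1
  | P1V.t _, P1V.b => 1
  | P1V.s, P1V.t _ => 1
  | P1V.t _, P1V.s => 1

/-!
Translate `f b` to the origin and rescale by `L = Lip f`. Then `f r` and all the `f (t i)` lie in
the unit ball, and the `f (t i)` are `2 / dist f`-separated. The definition of `β̄_Y` therefore
bounds `inf_i ‖f r - f (t i)‖` by `2 L (1 - β̄_Y (2 / dist f))`, improving on the triangle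
inequality bound `2 L`. One more edge, of image length at most `L`, leads from `f (t i)` to `f s`.
-/

section LipschitzConstants

variable {α β : Type*} {dα : α → α → ℝ} {dβ : β → β → ℝ} {f : α → β}

theorem LipUB.lipUB_lipConst {L : ℝ} (hf : LipUB dα dβ f L) (hdα : ∀ a b, 0 ≤ dα a b) :
    LipUB dα dβ f (lipConst dα dβ f) := by
  intro a b
  rcases (hdα a b).eq_or_lt with hzero | hpos
  · simpa only [← hzero, mul_zero] using hf a b
  · rw [← div_le_iff₀ hpos]
    refine le_csSup ⟨L, ?_⟩ ⟨a, b, hpos.ne', rfl⟩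
    rintro _ ⟨c, d, hcd, rfl⟩
    exact (div_le_iff₀ ((hdα c d).lt_of_ne' hcd)).2 (hf c d)

-- A co-Lipschitz bound for `f` is a Lipschitz bound for `id` from the pulled-back distance to `dα`.
theorem CoLipUB.coLipUB_colipConst {C : ℝ} (hf : CoLipUB dα dβ f C) (hdβ : ∀ x y, 0 ≤ dβ x y) :
    CoLipUB dα dβ f (colipConst dα dβ f) :=
  LipUB.lipUB_lipConst (dα := fun a b => dβ (f a) (f b)) (f := id) hf fun a b => hdβ (f a) (f b)

end LipschitzConstants

section RolewiczModulus

variable {Y : Type*} [SeminormedAddCommGroup Y]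

theorem bddAbove_rolewiczSet (t : ℝ) : BddAbove (rolewiczSet Y t) := by
  refine ⟨1, ?_⟩
  rintro _ ⟨x, hx, y, hy, -, rfl⟩
  have hbelow : BddBelow (range fun i => ‖x - y i‖ / 2) :=
    ⟨0, forall_mem_range.2 fun _ => by positivity⟩
  calc ⨅ i, ‖x - y i‖ / 2 ≤ ‖x - y 0‖ / 2 := ciInf_le hbelow 0
    _ ≤ (‖x‖ + ‖y 0‖) / 2 := by gcongr; exact norm_sub_le x (y 0)
    _ ≤ 1 := by linarith [hy 0]

theorem le_two_mul_one_sub_rolewiczMod {x : Y} {y : ℕ → Y} {t c : ℝ} (hx : ‖x‖ ≤ 1)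
    (hy : ∀ i, ‖y i‖ ≤ 1) (hsep : ∀ n m, n ≠ m → t ≤ ‖y n - y m‖) (hc : ∀ i, c ≤ ‖x - y i‖) :
    c ≤ 2 * (1 - rolewiczMod Y t) := by
  have hle_iInf : c / 2 ≤ ⨅ i, ‖x - y i‖ / 2 :=
    le_ciInf fun i => div_le_div_of_nonneg_right (hc i) zero_le_two
  have hiInf_le : ⨅ i, ‖x - y i‖ / 2 ≤ sSup (rolewiczSet Y t) :=
    le_csSup (bddAbove_rolewiczSet t) ⟨x, hx, y, hy, hsep, rfl⟩
  rw [rolewiczMod]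
  linarith

variable [NormedSpace ℝ Y]

theorem le_two_mul_mul_one_sub_rolewiczMod {b x : Y} {y : ℕ → Y} {L t c : ℝ} (hL : 0 < L)
    (hx : dist x b ≤ L) (hy : ∀ i, dist (y i) b ≤ L)
    (hsep : ∀ n m, n ≠ m → t * L ≤ dist (y n) (y m)) (hc : ∀ i, c ≤ dist x (y i)) :
    c ≤ 2 * L * (1 - rolewiczMod Y t) := by
  have hnorm (u v : Y) : ‖L⁻¹ • (u - v)‖ = dist u v / L := by
    rw [norm_smul, norm_inv, Real.norm_of_nonneg hL.le, ← dist_eq_norm, inv_mul_eq_div]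
  have hsub (u v : Y) : ‖L⁻¹ • (u - b) - L⁻¹ • (v - b)‖ = dist u v / L := by
    rw [← smul_sub, sub_sub_sub_cancel_right, hnorm]
  have hscaled : c / L ≤ 2 * (1 - rolewiczMod Y t) := by
    refine le_two_mul_one_sub_rolewiczMod (x := L⁻¹ • (x - b)) (y := fun i => L⁻¹ • (y i - b))
      ?_ (fun i => ?_) (fun n m hnm => ?_) fun i => ?_
    · rwa [hnorm, div_le_one hL]
    · rw [hnorm, div_le_one hL]
      exact hy i
    · rw [hsub, le_div_iff₀ hL]
      exact hsep n m hnm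
    · rw [hsub]
      exact div_le_div_of_nonneg_right (hc i) hL.le
  linarith [(div_le_iff₀ hL).1 hscaled]

theorem dist_le_two_mul_mul_one_sub_rolewiczMod_add {b x z : Y} {y : ℕ → Y} {L M t : ℝ}
    (hL : 0 < L) (hx : dist x b ≤ L) (hy : ∀ i, dist (y i) b ≤ L)
    (hsep : ∀ n m, n ≠ m → t * L ≤ dist (y n) (y m)) (hz : ∀ i, dist (y i) z ≤ M) :
    dist x z ≤ 2 * L * (1 - rolewiczMod Y t) + M := by
  have hfar (i : ℕ) : dist x z - M ≤ dist x (y i) := by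
    linarith [dist_triangle x (y i) z, hz i]
  linarith [le_two_mul_mul_one_sub_rolewiczMod hL hx hy hsep hfar]

end RolewiczModulus

section Parasol

theorem p1Dist_nonneg (u v : P1V) : 0 ≤ p1Dist u v := by
  cases u <;> cases v <;> simp only [p1Dist] <;> (try split_ifs) <;> norm_num

theorem parasol_top_bending_general {Y : Type*} [SeminormedAddCommGroup Y] [NormedSpace ℝ Y]
    {f : P1V → Y} {L C : ℝ} (hL : LipUB p1Dist (fun a b : Y => dist a b) f L)
    (hC : CoLipUB p1Dist (fun a b : Y => dist a b) f C) :
    ‖f P1V.r - f P1V.s‖ ≤ 3 * L * (1 - (2 / 3) * rolewiczMod Y (2 / (L * C))) := by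
  have hrb : dist (f P1V.r) (f P1V.b) ≤ L := by simpa only [p1Dist, mul_one] using hL P1V.r P1V.b
  have htb (i : ℕ) : dist (f (P1V.t i)) (f P1V.b) ≤ L := by
    simpa only [p1Dist, mul_one] using hL (P1V.t i) P1V.b
  have hts (i : ℕ) : dist (f (P1V.t i)) (f P1V.s) ≤ L := by
    simpa only [p1Dist, mul_one] using hL (P1V.t i) P1V.s
  have htt (n m : ℕ) (hnm : n ≠ m) : 2 ≤ C * dist (f (P1V.t n)) (f (P1V.t m)) := by
    simpa only [p1Dist, if_neg hnm] using hC (P1V.t n) (P1V.t m)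
  have hrb_lower : 0 < C * dist (f P1V.r) (f P1V.b) := one_pos.trans_le (hC P1V.r P1V.b)
  have hC_pos : 0 < C := pos_of_mul_pos_left hrb_lower dist_nonneg
  have hL_pos : 0 < L := (pos_of_mul_pos_right hrb_lower hC_pos.le).trans_le hrb
  have hsep (n m : ℕ) (hnm : n ≠ m) :
      2 / (L * C) * L ≤ dist (f (P1V.t n)) (f (P1V.t m)) := by
    calc 2 / (L * C) * L = 2 / C := by field_simp
      _ ≤ dist (f (P1V.t n)) (f (P1V.t m)) := (div_le_iff₀' hC_pos).2 (htt n m hnm)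
  rw [← dist_eq_norm]
  linarith [dist_le_two_mul_mul_one_sub_rolewiczMod_add hL_pos hrb htb hsep hts]

end Parasol

/-- Parasol top bending lemma, Lemma 2.6: for every bi-Lipschitz
embedding `f` of the level-1 parasol graph `P^ω_1` into a Banach space `Y`,
`‖f r - f s‖ ≤ 3 Lip(f) (1 - (2/3) β̄_Y(2 / dist f))`. -/
theorem parasol_top_bending
    (Y : Type*) [NormedAddCommGroup Y] [NormedSpace ℝ Y] [CompleteSpace Y]
    (f : P1V → Y) (hf : IsBiLipEmb p1Dist (fun a b : Y => dist a b) f) :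
    ‖f P1V.r - f P1V.s‖ ≤
      3 * lipConst p1Dist (fun a b : Y => dist a b) f *
        (1 - (2 / 3) * rolewiczMod Y (2 / distortionOf p1Dist (fun a b : Y => dist a b) f)) := by
  obtain ⟨-, L, C, hL, hC⟩ := hf
  exact parasol_top_bending_general (hL.lipUB_lipConst p1Dist_nonneg)
    (hC.coLipUB_colipConst fun _ _ => dist_nonneg)

end
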